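/- Let G be a finitely generated virtually abelian group, let S be a finite set generating G as a monoid with weight function ω : S → ℕ₊, and let H be any subgroup of G. Define the weight of a right coset Hg to be ω(Hg) = min{ω(x) : x ∈ Hg}. Then the weighted growth series of the set of right cosets H\G, namely ∑_{n≥0} #{C ∈ H\G : ω(C) = n} zⁿ, is a rational power series. -/

import Mathlib

/-- The weight of a group element `g` with respect to a generating set `S` and a
weight function `ω`: the minimal total weight among all words over `S` representing `g`. -/
noncomputable def wordWeight {G : Type*} [Group G] (S : Set G) (ω : G → ℕ) (g : G) : ℕ :=
  sInf {n | ∃ l : List G, (∀ x ∈ l, x ∈ S) ∧ l.prod = g ∧ (l.map ω).sum = n}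

/-- The weight of a right coset `Hg`: the minimal weight of an element of the coset. -/
noncomputable def cosetWeight {G : Type*} [Group G] (S : Set G) (ω : G → ℕ)
    (H : Subgroup G) (C : Quotient (QuotientGroup.rightRel H)) : ℕ :=
  sInf {n | ∃ g : G, Quotient.mk (QuotientGroup.rightRel H) g = C ∧ wordWeight S ω g = n}

/-- A formal power series with integer coefficients is rational if it is the quotient
of two integer polynomials. -/
def IsRationalSeries (f : PowerSeries ℤ) : Prop :=
  ∃ p q : Polynomial ℤ, q ≠ 0 ∧ f * (q : PowerSeries ℤ) = (p : PowerSeries ℤ)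

/-!
Let `A` be an abelian subgroup of finite index. The pairs `(g, k)` such that `g` is spelled by a
word of weight at most `k` form a finitely generated submonoid of `G × ℕ`. Factoring the words over
`S` along coset representatives of `A` turns them into the labels of the paths of a finite graph
with edges labelled by elements of `A × ℕ`; as in Kleene's theorem, these labels form semilinear
sets.

A double coset `HgA` consists of the cosets `H(ga)` with `a` in a quotient of `A`, and the epigraph
of the coset weight on this quotient is again semilinear. A semilinear set with finite level sets
has rational growth: it is a finite union of hybrid linear sets, which by Dickson's lemma are closed
under intersection, so inclusion–exclusion applies, and hybrid linear sets are handled by the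
Hilbert–Serre induction on the number of generators. The coset weight itself is recovered
from its epigraph, which is the disjoint union of the graph and of the epigraph shifted up by one.
-/

open scoped Pointwise

namespace IsRationalSeries

variable {f g : PowerSeries ℤ}

theorem of_polynomial (p : Polynomial ℤ) : IsRationalSeries (p : PowerSeries ℤ) :=
  ⟨p, 1, one_ne_zero, by simp⟩

theorem add (hf : IsRationalSeries f) (hg : IsRationalSeries g) : IsRationalSeries (f + g) := by
  obtain ⟨p, q, hq, hfpq⟩ := hf
  obtain ⟨p', q', hq', hgpq⟩ := hg
  refine ⟨p * q' + p' * q, q * q', mul_ne_zero hq hq', ?_⟩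
  push_cast
  rw [← hfpq, ← hgpq]
  ring

theorem polynomial_mul (r : Polynomial ℤ) (hf : IsRationalSeries f) :
    IsRationalSeries ((r : PowerSeries ℤ) * f) := by
  obtain ⟨p, q, hq, hfpq⟩ := hf
  exact ⟨r * p, q, hq, by push_cast; rw [← hfpq, mul_assoc]⟩

theorem sub (hf : IsRationalSeries f) (hg : IsRationalSeries g) : IsRationalSeries (f - g) := by
  simpa [sub_eq_add_neg] using hf.add (hg.polynomial_mul (-1))

theorem of_polynomial_mul {r : Polynomial ℤ} (hr : r ≠ 0)
    (hf : IsRationalSeries ((r : PowerSeries ℤ) * f)) : IsRationalSeries f := by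
  obtain ⟨p, q, hq, hfpq⟩ := hf
  exact ⟨p, r * q, mul_ne_zero hr hq, by push_cast; rw [← hfpq]; ring⟩

end IsRationalSeries

/-- The growth series `∑ₖ #{t ∈ T | wt t = k} zᵏ` of a set with respect to a weight function;
a weight attained infinitely often contributes `0`. -/
noncomputable def growthSeries {α : Type*} (wt : α → ℕ) (T : Set α) : PowerSeries ℤ :=
  PowerSeries.mk fun k => ((T ∩ wt ⁻¹' {k}).ncard : ℤ)

/-- A set has rational growth if every weight is attained finitely often on it and its growth
series is rational. -/
structure HasRationalGrowth {α : Type*} (wt : α → ℕ) (T : Set α) : Prop where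
  finite_fiber : ∀ k, (T ∩ wt ⁻¹' {k}).Finite
  rational : IsRationalSeries (growthSeries wt T)

section Growth

variable {α β : Type*} {wt : α → ℕ} {wt' : β → ℕ} {A B T : Set α}

theorem growthSeries_union (hA : ∀ k, (A ∩ wt ⁻¹' {k}).Finite)
    (hB : ∀ k, (B ∩ wt ⁻¹' {k}).Finite) (hAB : Disjoint A B) :
    growthSeries wt (A ∪ B) = growthSeries wt A + growthSeries wt B := by
  ext k
  simp only [growthSeries, PowerSeries.coeff_mk, map_add, Set.union_inter_distrib_right]
  rw [Set.ncard_union_eq (hAB.mono Set.inter_subset_left Set.inter_subset_left) (hA k) (hB k)]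
  push_cast
  rfl

theorem image_inter_preimage_singleton {τ : α → β} {d : ℕ} (hτ : ∀ t ∈ T, wt' (τ t) = wt t + d)
    (k : ℕ) : τ '' T ∩ wt' ⁻¹' {k} = τ '' (T ∩ {t | wt t + d = k}) := by
  ext x
  constructor
  · rintro ⟨⟨t, ht, rfl⟩, hk⟩
    exact ⟨t, ⟨ht, (hτ t ht).symm.trans hk⟩, rfl⟩
  · rintro ⟨t, ⟨ht, hk⟩, rfl⟩
    exact ⟨⟨t, ht, rfl⟩, (hτ t ht).trans hk⟩

theorem finite_image_fiber {τ : α → β} {d : ℕ} (hτ : ∀ t ∈ T, wt' (τ t) = wt t + d)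
    (hT : ∀ k, (T ∩ wt ⁻¹' {k}).Finite) (k : ℕ) : (τ '' T ∩ wt' ⁻¹' {k}).Finite := by
  rw [image_inter_preimage_singleton hτ]
  exact ((hT (k - d)).subset fun t ht => ⟨ht.1, Nat.eq_sub_of_add_eq ht.2⟩).image τ

theorem growthSeries_image {τ : α → β} {d : ℕ} (hτ : ∀ t ∈ T, wt' (τ t) = wt t + d)
    (hinj : Set.InjOn τ T) :
    growthSeries wt' (τ '' T) = PowerSeries.X ^ d * growthSeries wt T := by
  ext k
  rw [PowerSeries.coeff_X_pow_mul', growthSeries, PowerSeries.coeff_mk,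
    image_inter_preimage_singleton hτ, (hinj.mono Set.inter_subset_left).ncard_image]
  split_ifs with hdk
  · rw [growthSeries, PowerSeries.coeff_mk]
    congr 3
    ext t
    simp only [Set.mem_ofPred_eq, Set.mem_preimage, Set.mem_singleton_iff]
    omega
  · have hempty : T ∩ {t | wt t + d = k} = ∅ :=
      Set.eq_empty_iff_forall_notMem.2 fun t ⟨_, ht⟩ => hdk (ht ▸ Nat.le_add_left d _)
    rw [hempty, Set.ncard_empty, Nat.cast_zero]

namespace HasRationalGrowth

theorem of_finite (hT : T.Finite) : HasRationalGrowth wt T := by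
  obtain ⟨n, hn⟩ := (hT.image wt).bddAbove
  refine ⟨fun k => hT.subset Set.inter_subset_left, ?_⟩
  have htrunc : growthSeries wt T = (PowerSeries.trunc (n + 1) (growthSeries wt T)) := by
    ext k
    rw [Polynomial.coeff_coe, PowerSeries.coeff_trunc]
    split_ifs with hk
    · rfl
    · have hempty : T ∩ wt ⁻¹' {k} = ∅ := by
        rw [Set.eq_empty_iff_forall_notMem]
        rintro t ⟨ht, rfl⟩
        exact hk (Nat.lt_succ_of_le (hn ⟨t, ht, rfl⟩))
      rw [growthSeries, PowerSeries.coeff_mk, hempty, Set.ncard_empty, Nat.cast_zero]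
  exact htrunc ▸ .of_polynomial _

theorem disjoint_union (hA : HasRationalGrowth wt A) (hB : HasRationalGrowth wt B)
    (hAB : Disjoint A B) : HasRationalGrowth wt (A ∪ B) where
  finite_fiber k := by
    rw [Set.union_inter_distrib_right]
    exact (hA.finite_fiber k).union (hB.finite_fiber k)
  rational := by
    rw [growthSeries_union hA.finite_fiber hB.finite_fiber hAB]
    exact hA.rational.add hB.rational

theorem sdiff (hA : HasRationalGrowth wt A) (hB : HasRationalGrowth wt B) (hBA : B ⊆ A) :
    HasRationalGrowth wt (A \ B) := by
  have hfin : ∀ k, ((A \ B) ∩ wt ⁻¹' {k}).Finite := fun k =>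
    (hA.finite_fiber k).subset (Set.inter_subset_inter_left _ Set.sdiff_subset)
  have hseries := growthSeries_union hB.finite_fiber hfin Set.disjoint_sdiff_right
  rw [Set.union_sdiff_cancel hBA] at hseries
  exact ⟨hfin, eq_sub_of_add_eq' hseries.symm ▸ hA.rational.sub hB.rational⟩

theorem union (hA : HasRationalGrowth wt A) (hB : HasRationalGrowth wt B)
    (hAB : HasRationalGrowth wt (A ∩ B)) : HasRationalGrowth wt (A ∪ B) := by
  rw [← Set.union_sdiff_self, ← Set.sdiff_inter_self_eq_sdiff]
  exact hA.disjoint_union (hB.sdiff hAB Set.inter_subset_right)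
    (Set.disjoint_left.2 fun x hxA hxB => hxB.2 ⟨hxA, hxB.1⟩)

theorem image (hT : HasRationalGrowth wt T) {τ : α → β} {d : ℕ}
    (hτ : ∀ t ∈ T, wt' (τ t) = wt t + d) (hinj : Set.InjOn τ T) :
    HasRationalGrowth wt' (τ '' T) where
  finite_fiber := finite_image_fiber hτ hT.finite_fiber
  rational := by
    rw [growthSeries_image hτ hinj]
    simpa using hT.rational.polynomial_mul (Polynomial.X ^ d)

theorem biUnion_of_inter_closed {P : Set α → Prop} (hinter : ∀ A B, P A → P B → P (A ∩ B))
    (hP : ∀ A, P A → HasRationalGrowth wt A) {ι : Type*} (I : Finset ι) (f : ι → Set α)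
    (hf : ∀ i ∈ I, P (f i)) : HasRationalGrowth wt (⋃ i ∈ I, f i) := by
  classical
  induction I using Finset.induction generalizing f with
  | empty => simpa using of_finite Set.finite_empty
  | insert i I _ ih =>
    rw [Finset.set_biUnion_insert]
    rw [Finset.forall_mem_insert] at hf
    refine (hP _ hf.1).union (ih f hf.2) ?_
    rw [Set.inter_iUnion₂]
    exact ih (fun j => f i ∩ f j) fun j hj => hinter _ _ hf.1 (hf.2 j hj)

theorem of_fibers {ι : Type*} [Finite ι] (π : α → ι)
    (hπ : ∀ i, HasRationalGrowth wt (π ⁻¹' {i})) : HasRationalGrowth wt Set.univ := by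
  have := Fintype.ofFinite ι
  have huniv : (⋃ i ∈ (Finset.univ : Finset ι), π ⁻¹' {i}) = Set.univ := by
    ext; simp
  rw [← huniv]
  refine biUnion_of_inter_closed (P := fun A => A = ∅ ∨ ∃ i, A = π ⁻¹' {i}) ?_ ?_ _ _
    fun i _ => .inr ⟨i, rfl⟩
  · rintro A B (rfl | ⟨i, rfl⟩) (rfl | ⟨j, rfl⟩)
    · exact .inl (Set.empty_inter ∅)
    · exact .inl (Set.empty_inter _)
    · exact .inl (Set.inter_empty _)
    obtain rfl | hij := eq_or_ne i j
    · exact .inr ⟨i, Set.inter_self _⟩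
    · left
      rw [← Set.preimage_inter, Set.singleton_inter_eq_empty.2 (Set.mem_singleton_iff.not.2 hij),
        Set.preimage_empty]
  · rintro _ (rfl | ⟨i, rfl⟩)
    exacts [of_finite Set.finite_empty, hπ i]

theorem of_shift {X C K : Set α} {τ : α → α} {d : ℕ} (hd : 0 < d)
    (hτ : ∀ t ∈ X \ K, wt (τ t) = wt t + d) (hinj : Set.InjOn τ (X \ K))
    (hCX : C ⊆ X) (hKX : K ⊆ X) (hX : X \ C = τ '' (X \ K))
    (hC : HasRationalGrowth wt C) (hK : HasRationalGrowth wt K) : HasRationalGrowth wt X := by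
  have hXC : X = C ∪ τ '' (X \ K) := by rw [← hX, Set.union_sdiff_cancel hCX]
  have hfin (k : ℕ) : (X ∩ wt ⁻¹' {k}).Finite := by
    induction k using Nat.strong_induction_on with | _ k ih =>
    rw [hXC, Set.union_inter_distrib_right, image_inter_preimage_singleton hτ]
    refine (hC.finite_fiber k).union (.image τ ?_)
    rcases lt_or_ge k d with hkd | hdk
    · exact Set.finite_empty.subset fun t ⟨_, (ht : wt t + d = k)⟩ => by omega
    · exact (ih (k - d) (by omega)).subset fun t ht =>
        ⟨ht.1.1, Nat.eq_sub_of_add_eq ht.2⟩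
  have hfinK (k : ℕ) : ((X \ K) ∩ wt ⁻¹' {k}).Finite :=
    (hfin k).subset (Set.inter_subset_inter_left _ Set.sdiff_subset)
  have hseriesK : growthSeries wt X = growthSeries wt K + growthSeries wt (X \ K) := by
    rw [← growthSeries_union hK.finite_fiber hfinK Set.disjoint_sdiff_right,
      Set.union_sdiff_cancel hKX]
  have hseriesC : growthSeries wt X =
      growthSeries wt C + PowerSeries.X ^ d * growthSeries wt (X \ K) := by
    rw [← growthSeries_image hτ hinj, ← growthSeries_union hC.finite_fiber
      (finite_image_fiber hτ hfinK) (hX ▸ Set.disjoint_sdiff_right), ← hXC]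
  have hne : (1 - Polynomial.X ^ d : Polynomial ℤ) ≠ 0 := fun h => by
    simpa [hd.ne'] using congrArg (Polynomial.eval 0) h
  refine ⟨hfin, .of_polynomial_mul hne ?_⟩
  convert hC.rational.sub (hK.rational.polynomial_mul (Polynomial.X ^ d)) using 1
  push_cast
  linear_combination hseriesC - PowerSeries.X ^ d * hseriesK

theorem univ_of_epigraph {f : α → ℕ}
    (hf : HasRationalGrowth Prod.snd {p : α × ℕ | f p.1 ≤ p.2}) :
    HasRationalGrowth f Set.univ := by
  have hshift := hf.image (wt' := Prod.snd) (τ := fun p => (p.1, p.2 + 1)) (d := 1)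
    (fun _ _ => rfl) fun p _ q _ hpq => by
      rw [Prod.mk.injEq, add_left_inj] at hpq
      exact Prod.ext hpq.1 hpq.2
  have hgraph : HasRationalGrowth Prod.snd {p : α × ℕ | f p.1 = p.2} := by
    convert hf.sdiff hshift (Set.image_subset_iff.2 fun p => Nat.le_succ_of_le) using 1
    ext ⟨a, k⟩
    simp only [Set.mem_ofPred_eq, Set.mem_sdiff, Set.mem_image, Prod.mk.injEq, Prod.exists]
    refine ⟨?_, fun ⟨_, hlt⟩ => ?_⟩
    · rintro rfl
      refine ⟨le_rfl, ?_⟩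
      rintro ⟨a, k, hk, rfl, h⟩
      omega
    · by_contra hne
      exact hlt ⟨a, k - 1, by omega, rfl, by omega⟩
  have huniv : Prod.fst '' {p : α × ℕ | f p.1 = p.2} = Set.univ :=
    Set.eq_univ_of_forall fun a => ⟨(a, f a), rfl, rfl⟩
  exact huniv ▸ hgraph.image (d := 0) (fun _ hp => hp)
    fun p hp q hq hpq => Prod.ext hpq (hp.symm.trans ((congrArg f hpq).trans hq))

end HasRationalGrowth

end Growth

section HybridLinear

open AddSubmonoid

/-- A hybrid linear set is a finite union of translates of one finitely generated submonoid.
Unlike linear sets, hybrid linear sets are closed under intersection. -/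
def IsHybridLinearSet {K : Type*} [AddCommMonoid K] (T : Set K) : Prop :=
  ∃ (B : Set K) (M : AddSubmonoid K), B.Finite ∧ M.FG ∧ T = B + (M : Set K)

-- Dickson's lemma: `F` is the set of minimal elements of `X`.
theorem exists_finite_add_eq {P : Type*} [AddCommMonoid P] [PartialOrder P]
    [CanonicallyOrderedAdd P] [WellQuasiOrderedLE P] {X D : Set P}
    (hX : ∀ x ∈ X, ∀ d, x + d ∈ X ↔ d ∈ D) : ∃ F : Set P, F.Finite ∧ X = F + D := by
  refine ⟨{x | Minimal (· ∈ X) x},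
    WellQuasiOrderedLE.finite_of_isAntichain (setOfPred_minimal_antichain _), ?_⟩
  ext x
  constructor
  · intro hx
    obtain ⟨m, hmx, hm⟩ := exists_minimal_le_of_wellFoundedLT (· ∈ X) x hx
    obtain ⟨d, rfl⟩ := exists_add_of_le hmx
    exact Set.add_mem_add hm ((hX m hm.prop d).1 hx)
  · rintro ⟨m, hm, d, hd, rfl⟩
    exact (hX m hm.prop d).2 hd

variable {K : Type*}

theorem exists_finite_eq_add_of_add_mem [AddCommMonoid K] {M : AddSubmonoid K} (hM : M.FG)
    {B V : Set K} (hB : B.Finite) (hVB : V ⊆ B + (M : Set K))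
    (hV : ∀ m ∈ M, ∀ v ∈ V, v + m ∈ V) : ∃ B' : Set K, B'.Finite ∧ V = B' + (M : Set K) := by
  obtain ⟨p, φ, rfl⟩ := fg_iff_exists_fin_addMonoidHom.1 hM
  have hDickson (b : K) : ∃ F : Set (Fin p → ℕ), F.Finite ∧ {u | b + φ u ∈ V} = F + Set.univ :=
    exists_finite_add_eq fun u hu d => by
      simpa [add_assoc] using hV (φ d) ⟨d, rfl⟩ _ hu
  choose F hF hFV using hDickson
  refine ⟨⋃ b ∈ B, (b + φ ·) '' F b, hB.biUnion fun b _ => (hF b).image _, ?_⟩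
  ext v
  constructor
  · intro hv
    obtain ⟨b, hb, _, ⟨u, rfl⟩, rfl⟩ := hVB hv
    obtain ⟨m, hm, d, -, rfl⟩ : u ∈ F b + Set.univ := hFV b ▸ hv
    exact ⟨b + φ m, Set.mem_biUnion hb ⟨m, hm, rfl⟩, φ d, ⟨d, rfl⟩, by simp [add_assoc]⟩
  · rintro ⟨_, hy, m, hm, rfl⟩
    obtain ⟨b, -, u, hu, rfl⟩ := Set.mem_iUnion₂.1 hy
    have huV : u ∈ {u | b + φ u ∈ V} := hFV b ▸ ⟨u, hu, 0, trivial, add_zero u⟩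
    exact hV m hm _ huV

theorem IsHybridLinearSet.inter [AddCancelCommMonoid K] {T T' : Set K}
    (hT : IsHybridLinearSet T) (hT' : IsHybridLinearSet T') : IsHybridLinearSet (T ∩ T') := by
  obtain ⟨B, M, hB, hM, rfl⟩ := hT
  obtain ⟨B', M', hB', hM', rfl⟩ := hT'
  obtain ⟨p, φ, rfl⟩ := fg_iff_exists_fin_addMonoidHom.1 hM
  obtain ⟨q, ψ, rfl⟩ := fg_iff_exists_fin_addMonoidHom.1 hM'
  let f : (Fin p → ℕ) × (Fin q → ℕ) →+ K := φ.comp (AddMonoidHom.fst _ _)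
  let g : (Fin p → ℕ) × (Fin q → ℕ) →+ K := ψ.comp (AddMonoidHom.snd _ _)
  have hDickson (b b' : K) : ∃ F : Set ((Fin p → ℕ) × (Fin q → ℕ)), F.Finite ∧
      {z | b + f z = b' + g z} = F + (f.eqLocusM g : Set _) :=
    exists_finite_add_eq fun z (hz : b + f z = b' + g z) d => by
      simp only [Set.mem_ofPred_eq, map_add, ← add_assoc, hz, add_right_inj]
      rfl
  choose F hF hFeq using hDickson
  refine ⟨⋃ b ∈ B, ⋃ b' ∈ B', (b + f ·) '' F b b', (f.eqLocusM g).map f,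
    hB.biUnion fun b _ => hB'.biUnion fun b' _ => (hF b b').image _, (fg_eqLocusM f g).map f, ?_⟩
  ext x
  constructor
  · rintro ⟨⟨b, hb, _, ⟨u, rfl⟩, rfl⟩, b', hb', _, ⟨v, rfl⟩, huv⟩
    obtain ⟨z, hz, d, hd, hzd⟩ : (u, v) ∈ F b b' + (f.eqLocusM g : Set _) :=
      hFeq b b' ▸ huv.symm
    refine ⟨b + f z, Set.mem_biUnion hb (Set.mem_biUnion hb' ⟨z, hz, rfl⟩), f d, ⟨d, hd, rfl⟩, ?_⟩
    change b + f z + f d = b + f (u, v)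
    rw [← hzd, map_add, add_assoc]
  · rintro ⟨_, hy, _, ⟨d, hd, rfl⟩, rfl⟩
    obtain ⟨b, hb, hy⟩ := Set.mem_iUnion₂.1 hy
    obtain ⟨b', hb', z, hz, rfl⟩ := Set.mem_iUnion₂.1 hy
    have hzd : z + d ∈ {z | b + f z = b' + g z} := hFeq b b' ▸ Set.add_mem_add hz hd
    refine ⟨⟨b, hb, f (z + d), ⟨_, rfl⟩, by simp [add_assoc]⟩,
      ⟨b', hb', g (z + d), ⟨_, rfl⟩, ?_⟩⟩
    change b' + g (z + d) = b + f z + f d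
    rw [← (hzd : b + f (z + d) = _), map_add, add_assoc]

theorem add_closure_insert [AddCommMonoid K] (B F : Set K) (g : K) :
    B + (closure (insert g F) : Set K) =
      (B + (closure F : Set K)) ∪ (g +ᵥ (B + (closure (insert g F) : Set K))) := by
  have hF : closure F ≤ closure (insert g F) := closure_mono (Set.subset_insert g F)
  have hg : g ∈ closure (insert g F) := subset_closure (Set.mem_insert g F)
  apply subset_antisymm
  · rintro _ ⟨b, hb, m, hm, rfl⟩
    rw [SetLike.mem_coe, Set.insert_eq, AddSubmonoid.closure_union, mem_sup] at hm
    obtain ⟨y, hy, f, hf, rfl⟩ := hm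
    obtain ⟨_ | n, rfl⟩ := mem_closure_singleton.1 hy
    · left
      simpa using Set.add_mem_add hb hf
    · refine .inr ⟨b + (n • g + f), Set.add_mem_add hb ?_, ?_⟩
      · exact add_mem (nsmul_mem hg n) (hF hf)
      · simp only [vadd_eq_add, succ_nsmul]
        abel
  · refine Set.union_subset (Set.add_subset_add_left hF) ?_
    rintro _ ⟨_, ⟨b, hb, m, hm, rfl⟩, rfl⟩
    exact ⟨b, hb, g + m, add_mem hg hm, by simp [add_left_comm]⟩

theorem sdiff_eq_sdiff_of_eq_union {α : Type*} {T A S U : Set α} (hT : T = A ∪ S) (hS : S ⊆ U) :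
    T \ U = A \ U := by
  rw [hT, Set.union_sdiff_distrib, Set.sdiff_eq_empty.2 hS, Set.union_empty]

theorem HasRationalGrowth.sdiff_of_vadd [AddCancelCommMonoid K] {wt : K →+ ℕ} {g : K}
    (hg : 0 < wt g) {T U : Set K} (hT : g +ᵥ T ⊆ T) (hU : g +ᵥ U ⊆ U)
    (hC : HasRationalGrowth wt (T \ (U ∪ (g +ᵥ T))))
    (hK : HasRationalGrowth wt ({t ∈ T | g + t ∈ U} \ U)) : HasRationalGrowth wt (T \ U) := by
  refine .of_shift (τ := (g + ·)) hg (fun t _ => ?_) (add_right_injective g).injOn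
    (Set.sdiff_subset_sdiff_right Set.subset_union_left)
    (Set.sdiff_subset_sdiff_left (Set.sep_subset _ _)) ?_ hC hK
  · rw [map_add, add_comm]
  · rw [← Set.sdiff_sdiff, Set.sdiff_sdiff_right_self]
    ext x
    constructor
    · rintro ⟨⟨-, hxU⟩, t, ht, rfl⟩
      exact ⟨t, ⟨⟨ht, fun htU => hxU (hU ⟨t, htU, rfl⟩)⟩, fun htV => hxU htV.1.2⟩, rfl⟩
    · rintro ⟨t, ⟨⟨ht, htU⟩, htV⟩, rfl⟩
      exact ⟨⟨hT ⟨t, ht, rfl⟩, fun hgt => htV ⟨⟨ht, hgt⟩, htU⟩⟩, t, ht, rfl⟩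

-- Induction on the number of generators, as for the Hilbert series of a graded module: a
-- generator `g` is removed by comparing `T \ U` with its translate by `g`.
theorem hasRationalGrowth_add_closure_sdiff [AddCancelCommMonoid K] (wt : K →+ ℕ) {F : Set K}
    (hF : F.Finite) (hpos : ∀ g ∈ F, 0 < wt g) {B U : Set K} (hB : B.Finite)
    (hU : ∀ m ∈ closure F, ∀ u ∈ U, u + m ∈ U) :
    HasRationalGrowth wt ((B + (closure F : Set K)) \ U) := by
  induction F, hF using Set.Finite.induction_on generalizing B U with
  | empty => exact .of_finite (by simpa using hB.sdiff)
  | @insert g F _ hF ih =>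
    rw [Set.forall_mem_insert] at hpos
    have hFg : closure F ≤ closure (insert g F) := closure_mono (Set.subset_insert g F)
    have hg : g ∈ closure (insert g F) := subset_closure (Set.mem_insert g F)
    set T := B + (closure (insert g F) : Set K)
    have hT : T = (B + (closure F : Set K)) ∪ (g +ᵥ T) := add_closure_insert B F g
    have hTadd : ∀ m ∈ closure (insert g F), ∀ t ∈ T, t + m ∈ T := by
      rintro m hm _ ⟨b, hb, m', hm', rfl⟩
      exact ⟨b, hb, m' + m, add_mem hm' hm, (add_assoc ..).symm⟩
    refine .sdiff_of_vadd hpos.1 (Set.subset_union_right.trans hT.symm.subset) ?_ ?_ ?_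
    · rintro _ ⟨u, hu, rfl⟩
      exact (add_comm u g).subst (hU g hg u hu)
    · rw [sdiff_eq_sdiff_of_eq_union hT Set.subset_union_right]
      refine ih hpos.2 hB ?_
      rintro m hm _ (hu | ⟨t, ht, rfl⟩)
      · exact .inl (hU m (hFg hm) _ hu)
      · exact .inr ⟨t + m, hTadd m (hFg hm) t ht, (add_assoc ..).symm⟩
    · obtain ⟨B', hB', hV⟩ := exists_finite_eq_add_of_add_mem (V := {t ∈ T | g + t ∈ U})
        ((fg_iff _).2 ⟨_, rfl, hF.insert g⟩) hB (Set.sep_subset _ _) fun m hm v hv =>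
        ⟨hTadd m hm v hv.1, by rw [← add_assoc]; exact hU m hm _ hv.2⟩
      have hgV : g +ᵥ {t ∈ T | g + t ∈ U} ⊆ U := by
        rintro _ ⟨t, ht, rfl⟩
        exact ht.2
      have hV' := add_closure_insert B' F g
      rw [← hV] at hV'
      rw [sdiff_eq_sdiff_of_eq_union hV' hgV]
      exact ih hpos.2 hB' fun m hm => hU m (hFg hm)

theorem IsHybridLinearSet.hasRationalGrowth [AddCancelCommMonoid K] {wt : K →+ ℕ} {T : Set K}
    (hT : IsHybridLinearSet T) (hfin : ∀ k, (T ∩ wt ⁻¹' {k}).Finite) :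
    HasRationalGrowth wt T := by
  obtain ⟨B, M, hB, ⟨F, rfl⟩, rfl⟩ := hT
  set F₀ : Set K := {g ∈ F | wt g = 0} with hF₀
  set F₁ : Set K := {g ∈ F | wt g ≠ 0} with hF₁
  have hF : (closure (F : Set K) : Set K) = (closure F₀ : Set K) + (closure F₁ : Set K) := by
    rw [← coe_sup, ← AddSubmonoid.closure_union, hF₀, hF₁]
    congr 2
    ext g
    by_cases h : wt g = 0 <;> simp [h]
  have hwt : ∀ m ∈ closure F₀, wt m = 0 := by
    have : closure F₀ ≤ AddMonoidHom.mker wt := closure_le.2 fun g hg => hg.2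
    exact this
  have hB₀ : (B + (closure F₀ : Set K)).Finite := by
    refine (hB.biUnion fun b _ => hfin (wt b)).subset ?_
    rintro _ ⟨b, hb, m, hm, rfl⟩
    refine Set.mem_biUnion hb ⟨Set.add_mem_add hb ?_, ?_⟩
    · exact closure_mono (Set.sep_subset _ _) hm
    · simp [hwt m hm]
  simpa [hF, add_assoc] using hasRationalGrowth_add_closure_sdiff wt
    (F.finite_toSet.subset (Set.sep_subset _ _)) (fun g hg => Nat.pos_of_ne_zero hg.2) hB₀
    (U := ∅) (by simp)

theorem HasRationalGrowth.of_isSemilinearSet [AddCancelCommMonoid K] {wt : K →+ ℕ} {T : Set K}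
    (hT : IsSemilinearSet T) (hfin : ∀ k, (T ∩ wt ⁻¹' {k}).Finite) :
    HasRationalGrowth wt T := by
  obtain ⟨L, hL, rfl⟩ := isSemilinearSet_iff.1 hT
  rw [Set.sUnion_eq_biUnion]
  refine .biUnion_of_inter_closed
    (P := fun A => IsHybridLinearSet A ∧ ∀ k, (A ∩ wt ⁻¹' {k}).Finite)
    (fun A A' hA hA' => ⟨hA.1.inter hA'.1, fun k => ?_⟩) (fun A hA => hA.1.hasRationalGrowth hA.2)
    L id fun A hA => ⟨?_, fun k => ?_⟩
  · exact (hA.2 k).subset (Set.inter_subset_inter_left _ Set.inter_subset_left)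
  · obtain ⟨a, M, hM, rfl⟩ := isLinearSet_iff_exists_fg_eq_vadd.1 (hL A hA)
    exact ⟨{a}, M, Set.finite_singleton a, hM, by rw [Set.singleton_add]; rfl⟩
  · exact (hfin k).subset (Set.inter_subset_inter_left _ (Set.subset_sUnion_of_mem hA))

end HybridLinear

section Kleene

/-- The labels of the nonempty paths of a graph whose edges from `a` to `b` are labelled by the
elements of `R a b`; a path adds up the labels of its edges, and all its intermediate vertices are
required to lie in `J`. -/
inductive PathSum {Q K : Type*} [AddCommMonoid K] (R : Q → Q → Set K) (J : Set Q) : Q → Q → K → Prop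
  | edge {a b : Q} {x : K} : x ∈ R a b → PathSum R J a b x
  | cons {a c b : Q} {x y : K} : x ∈ R a c → c ∈ J → PathSum R J c b y → PathSum R J a b (x + y)

variable {Q K : Type*} [AddCommMonoid K] {R : Q → Q → Set K} {J : Set Q}

namespace PathSum

theorem mono {J' : Set Q} (hJ : J ⊆ J') {a b : Q} {x : K} (hx : PathSum R J a b x) :
    PathSum R J' a b x := by
  induction hx with
  | edge hx => exact .edge hx
  | cons hx hc _ ih => exact .cons hx (hJ hc) ih

theorem append {a c b : Q} (hc : c ∈ J) {x y : K} (hx : PathSum R J a c x)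
    (hy : PathSum R J c b y) : PathSum R J a b (x + y) := by
  induction hx with
  | edge hx => exact .cons hx hc hy
  | cons hx hd _ ih =>
    rw [add_assoc]
    exact .cons hx hd (ih hc hy)

theorem append_closure {a c : Q} (hc : c ∈ J) {x y : K} (hx : PathSum R J a c x)
    (hy : y ∈ AddSubmonoid.closure {y | PathSum R J c c y}) : PathSum R J a c (x + y) := by
  induction hy using AddSubmonoid.closure_induction_right with
  | zero => rwa [add_zero]
  | add_right y hy z hz ih =>
    rw [← add_assoc]
    exact ih.append hc hz

theorem setOf_insert (J : Set Q) (c a b : Q) :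
    {x | PathSum R (insert c J) a b x} = {x | PathSum R J a b x} ∪ ({x | PathSum R J a c x} +
      (AddSubmonoid.closure {x | PathSum R J c c x} : Set K) + {x | PathSum R J c b x}) := by
  have hJ : J ⊆ insert c J := Set.subset_insert c J
  have hc : c ∈ insert c J := Set.mem_insert c J
  ext x
  constructor
  · intro h
    induction h with
    | edge hx => exact .inl (.edge hx)
    | @cons a d b x y hx hd _ ih =>
      rcases ih with hy | ⟨_, ⟨y₁, hy₁, y₂, hy₂, rfl⟩, y₃, hy₃, rfl⟩ <;> rcases hd with rfl | hd
      · exact .inr ⟨_, ⟨x, .edge hx, 0, zero_mem _, rfl⟩, y, hy, by simp⟩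
      · exact .inl (.cons hx hd hy)
      · exact .inr ⟨_, ⟨x, .edge hx, y₁ + y₂, add_mem (AddSubmonoid.subset_closure hy₁) hy₂, rfl⟩,
          y₃, hy₃, by simp [add_assoc]⟩
      · exact .inr ⟨_, ⟨x + y₁, .cons hx hd hy₁, y₂, hy₂, rfl⟩, y₃, hy₃, by simp [add_assoc]⟩
  · rintro (hx | ⟨_, ⟨x₁, hx₁, x₂, hx₂, rfl⟩, x₃, hx₃, rfl⟩)
    · exact hx.mono hJ
    · have hx₂' := AddSubmonoid.closure_mono (fun y (hy : PathSum R J c c y) => hy.mono hJ) hx₂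
      exact (append_closure hc (hx₁.mono hJ) hx₂').append hc (hx₃.mono hJ)

theorem isSemilinearSet (hJ : J.Finite) (hR : ∀ a b, IsSemilinearSet (R a b)) (a b : Q) :
    IsSemilinearSet {x | PathSum R J a b x} := by
  induction J, hJ using Set.Finite.induction_on generalizing a b with
  | empty =>
    convert hR a b using 1
    ext x
    refine ⟨?_, .edge⟩
    rintro (hx | ⟨-, hc, -⟩)
    exacts [hx, hc.elim]
  | @insert c J _ _ ih =>
    rw [setOf_insert]
    exact (ih a b).union (((ih a c).add (ih c c).closure).add (ih c b))

end PathSum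

end Kleene

section Slices

variable {G A W : Type*} [Group G]

theorem exists_finite_subset_forall_inv_mul_mem (N : Subgroup G) [N.FiniteIndex] (X : Set G) :
    ∃ Y ⊆ X, Y.Finite ∧ ∀ x ∈ X, ∃ y ∈ Y, y⁻¹ * x ∈ N := by
  obtain ⟨Y, hYX, hY⟩ := Set.exists_subset_bijOn X ((↑) : G → G ⧸ N)
  refine ⟨Y, hYX, Set.Finite.of_finite_image (Set.toFinite _) hY.injOn, fun x hx => ?_⟩
  obtain ⟨y, hy, hyx⟩ := hY.surjOn (Set.mem_image_of_mem _ hx)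
  exact ⟨y, hy, QuotientGroup.eq.1 hyx⟩

open Multiplicative

variable [AddCommGroup A] [AddCommMonoid W] {j : Multiplicative A →* G}
  {F : Set (G × Multiplicative W)}

/-- The edge labels of the graph whose paths spell the products of elements of `F` in Schreier
form: a pair `(s, w)` in `F` yields an edge from `a` to `b` labelled `(x, w)` when `a⁻¹ s b = j x`.
The element `1` is adjoined to `F` so that the empty product is spelled by a nonempty path. -/
def schreierEdges (j : Multiplicative A →* G) (F : Set (G × Multiplicative W)) (a b : G) :
    Set (A × W) :=
  {x | (a * j (ofAdd x.1) * b⁻¹, ofAdd x.2) ∈ insert 1 F}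

theorem finite_schreierEdges (hj : Function.Injective j) (hF : F.Finite) (a b : G) :
    (schreierEdges j F a b).Finite :=
  (hF.insert 1).preimage (Function.Injective.injOn fun x y hxy => by
    simpa [Prod.ext_iff, hj.eq_iff] using hxy)

theorem PathSum.mem_closure {J : Set G} {a b : G} {x : A × W}
    (hx : PathSum (schreierEdges j F) J a b x) :
    (a * j (ofAdd x.1) * b⁻¹, ofAdd x.2) ∈ Submonoid.closure F := by
  rw [← Submonoid.closure_insert_one]
  induction hx with
  | edge hx => exact Submonoid.subset_closure hx
  | @cons a c b x y hx _ _ ih =>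
    have hac : (a * j (ofAdd x.1) * c⁻¹, ofAdd x.2) ∈ Submonoid.closure (insert 1 F) :=
      Submonoid.subset_closure hx
    simpa [mul_assoc] using mul_mem hac ih

theorem PathSum.of_mem_closure {J : Set G} (hJ : ∀ g, ∃ c ∈ J, c⁻¹ * g ∈ j.range)
    {p : G × Multiplicative W} (hp : p ∈ Submonoid.closure F) {a b : G} {x : A}
    (hx : a * j (ofAdd x) * b⁻¹ = p.1) :
    PathSum (schreierEdges j F) J a b (x, p.2.toAdd) := by
  induction hp using Submonoid.closure_induction_left generalizing a x with
  | one => exact .edge (.inl (Prod.ext hx rfl))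
  | mul_left s hs p _ ih =>
    obtain ⟨c, hc, y, hy⟩ := hJ (s.1⁻¹ * a)
    obtain ⟨y, rfl⟩ := ofAdd.surjective y
    have hedge : (-y, s.2.toAdd) ∈ schreierEdges j F a c := by
      have hs_fst : a * j (ofAdd (-y)) * c⁻¹ = s.1 := by
        rw [ofAdd_neg, map_inv, hy]
        group
      exact .inr (hs_fst ▸ hs)
    have hrest : c * j (ofAdd (y + x)) * b⁻¹ = p.1 := by
      rw [ofAdd_add, map_mul, hy, eq_inv_mul_of_mul_eq hx.symm]
      group
    simpa using PathSum.cons hedge hc (ih hrest)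

theorem isSemilinearSet_slice (hj : Function.Injective j) [j.range.FiniteIndex]
    (hF : F.Finite) (g : G) :
    IsSemilinearSet {x : A × W | (g * j (ofAdd x.1), ofAdd x.2) ∈ Submonoid.closure F} := by
  obtain ⟨J, -, hJfin, hJ⟩ := exists_finite_subset_forall_inv_mul_mem j.range Set.univ
  convert PathSum.isSemilinearSet hJfin
    (fun a b => .of_finite (finite_schreierEdges hj hF a b)) g 1 using 1
  ext x
  constructor
  · exact fun hx => .of_mem_closure (fun g => hJ g trivial) hx (by simp)
  · intro hx
    simpa using hx.mem_closure

end Slices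

section Weights

open Multiplicative

variable {G : Type*} [Group G] {S : Set G} {ω : G → ℕ} {H : Subgroup G}

/-- The pairs `(s, ω s)` together with `(1, 1)`. In the submonoid they generate, the elements over
`g` are the pairs `(g, k)` with `k` at least the weight of `g`. -/
def weightGenerators (S : Set G) (ω : G → ℕ) : Set (G × Multiplicative ℕ) :=
  insert (1, ofAdd 1) ((fun s => (s, ofAdd (ω s))) '' S)

theorem finite_weightGenerators (hS : S.Finite) : (weightGenerators S ω).Finite :=
  (hS.image _).insert _

theorem mem_closure_weightGenerators {g : G} {k : ℕ} :
    (g, ofAdd k) ∈ Submonoid.closure (weightGenerators S ω) ↔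
      ∃ l : List G, (∀ x ∈ l, x ∈ S) ∧ l.prod = g ∧ (l.map ω).sum ≤ k := by
  constructor
  · suffices ∀ p ∈ Submonoid.closure (weightGenerators S ω),
        ∃ l : List G, (∀ x ∈ l, x ∈ S) ∧ l.prod = p.1 ∧ (l.map ω).sum ≤ p.2.toAdd from this _
    intro p hp
    induction hp using Submonoid.closure_induction_left with
    | one => exact ⟨[], by simp⟩
    | mul_left s hs p _ ih =>
      obtain ⟨l, hlS, hl, hlω⟩ := ih
      obtain rfl | ⟨s, hs, rfl⟩ := hs
      · exact ⟨l, hlS, by simpa using hl, hlω.trans (Nat.le_add_left _ _)⟩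
      · exact ⟨s :: l, List.forall_mem_cons.2 ⟨hs, hlS⟩, by simp [hl], by simpa using hlω⟩
  · rintro ⟨l, hlS, rfl, hlω⟩
    have hword : (l.prod, ofAdd (l.map ω).sum) ∈ Submonoid.closure (weightGenerators S ω) := by
      clear hlω
      induction l with
      | nil => exact one_mem _
      | cons s l ih =>
        rw [List.forall_mem_cons] at hlS
        exact mul_mem (Submonoid.subset_closure (.inr ⟨s, hlS.1, rfl⟩)) (ih hlS.2)
    have hpad : ((1, ofAdd 1) : G × Multiplicative ℕ) ∈ Submonoid.closure (weightGenerators S ω) :=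
      Submonoid.subset_closure (.inl rfl)
    obtain ⟨d, rfl⟩ := Nat.exists_eq_add_of_le hlω
    simpa [← ofAdd_nsmul, -ofAdd_list_prod, ← ofAdd_add] using mul_mem hword (pow_mem hpad d)

theorem sInf_le_iff_exists_mem_le {s : Set ℕ} (hs : s.Nonempty) {k : ℕ} :
    sInf s ≤ k ↔ ∃ m ∈ s, m ≤ k :=
  ⟨fun h => ⟨sInf s, Nat.sInf_mem hs, h⟩, fun ⟨_, hm, hmk⟩ => (Nat.sInf_le hm).trans hmk⟩

theorem wordWeight_le_iff (hS : Submonoid.closure S = ⊤) {g : G} {k : ℕ} :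
    wordWeight S ω g ≤ k ↔ (g, ofAdd k) ∈ Submonoid.closure (weightGenerators S ω) := by
  obtain ⟨l, hlS, hl⟩ := Submonoid.exists_list_of_mem_closure (hS ▸ Submonoid.mem_top g)
  have hne : {n | ∃ l : List G, (∀ x ∈ l, x ∈ S) ∧ l.prod = g ∧ (l.map ω).sum = n}.Nonempty :=
    ⟨_, l, hlS, hl, rfl⟩
  rw [mem_closure_weightGenerators, wordWeight, sInf_le_iff_exists_mem_le hne]
  constructor
  · rintro ⟨_, ⟨l, hlS, hl, rfl⟩, hk⟩
    exact ⟨l, hlS, hl, hk⟩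
  · rintro ⟨l, hlS, hl, hk⟩
    exact ⟨_, ⟨l, hlS, hl, rfl⟩, hk⟩

theorem cosetWeight_le_iff (hS : Submonoid.closure S = ⊤)
    {C : Quotient (QuotientGroup.rightRel H)} {k : ℕ} :
    cosetWeight S ω H C ≤ k ↔
      ∃ g, Quotient.mk _ g = C ∧ (g, ofAdd k) ∈ Submonoid.closure (weightGenerators S ω) := by
  obtain ⟨g, hg⟩ := Quotient.exists_rep C
  have hne : {n | ∃ g, Quotient.mk _ g = C ∧ wordWeight S ω g = n}.Nonempty := ⟨_, g, hg, rfl⟩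
  rw [cosetWeight, sInf_le_iff_exists_mem_le hne]
  constructor
  · rintro ⟨_, ⟨g, hg, rfl⟩, hk⟩
    exact ⟨g, hg, (wordWeight_le_iff hS).1 hk⟩
  · rintro ⟨g, hg, hk⟩
    exact ⟨_, ⟨g, hg, rfl⟩, (wordWeight_le_iff hS).2 hk⟩

theorem finite_setOf_mem_closure_weightGenerators (hSfin : S.Finite) (hω : ∀ s ∈ S, 0 < ω s)
    (k : ℕ) : {g | (g, ofAdd k) ∈ Submonoid.closure (weightGenerators S ω)}.Finite := by
  have : Finite S := hSfin
  refine ((List.finite_length_le S k).image fun l => (l.map (↑)).prod).subset fun g hg => ?_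
  obtain ⟨l, hlS, rfl, hlω⟩ := mem_closure_weightGenerators.1 hg
  have hlen : l.length ≤ k := calc
    l.length = (l.map fun _ => 1).sum := by simp
    _ ≤ (l.map ω).sum := List.sum_le_sum fun s hs => hω s (hlS s hs)
    _ ≤ k := hlω
  lift l to List S using hlS
  exact ⟨l, by simpa using hlen, rfl⟩

theorem finite_setOf_cosetWeight_le (hS : Submonoid.closure S = ⊤) (hSfin : S.Finite)
    (hω : ∀ s ∈ S, 0 < ω s) (k : ℕ) :
    {C : Quotient (QuotientGroup.rightRel H) | cosetWeight S ω H C ≤ k}.Finite :=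
  ((finite_setOf_mem_closure_weightGenerators hSfin hω k).image (Quotient.mk _)).subset
    fun _ hC => let ⟨g, hg, hk⟩ := (cosetWeight_le_iff hS).1 hC; ⟨g, hk, hg⟩

end Weights

section Cosets

open Multiplicative

variable {G A : Type*} [Group G] [AddCommGroup A] {j : Multiplicative A →* G} {H : Subgroup G}

theorem rightCoset_mk_eq_iff {x y : G} :
    (Quotient.mk (QuotientGroup.rightRel H) x = Quotient.mk _ y) ↔ y * x⁻¹ ∈ H :=
  Quotient.eq.trans QuotientGroup.rightRel_apply

theorem rightCoset_mk_mul_right_inj {x y : G} (z : G) :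
    (Quotient.mk (QuotientGroup.rightRel H) (x * z) = Quotient.mk _ (y * z)) ↔
      Quotient.mk (QuotientGroup.rightRel H) x = Quotient.mk _ y := by
  simp [rightCoset_mk_eq_iff, mul_assoc]

/-- The stabilizer of the coset `Hg` under the action of `A` on `H \ G` by right translation
through `j`. -/
def cosetStabilizer (j : Multiplicative A →* G) (H : Subgroup G) (g : G) : AddSubgroup A :=
  (H.comap ((MulAut.conj g).toMonoidHom.comp j)).toAddSubgroup'

theorem neg_add_mem_cosetStabilizer_iff {g : G} {a b : A} :
    -a + b ∈ cosetStabilizer j H g ↔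
      Quotient.mk (QuotientGroup.rightRel H) (g * j (ofAdd a)) =
        Quotient.mk _ (g * j (ofAdd b)) := by
  have hconj : g * j (ofAdd b) * (g * j (ofAdd a))⁻¹ = g * j (ofAdd (-a + b)) * g⁻¹ := by
    rw [neg_add_eq_sub, ofAdd_sub, map_div]
    simp [div_eq_mul_inv, mul_assoc]
  rw [rightCoset_mk_eq_iff, hconj]
  rfl

/-- The orbit map of the coset `Hg` under the action of `A` on `H \ G` by right translation
through `j`, factored through the stabilizer. -/
def cosetOrbit (j : Multiplicative A →* G) (H : Subgroup G) (g : G) :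
    A ⧸ cosetStabilizer j H g → Quotient (QuotientGroup.rightRel H) :=
  Quotient.lift (fun a => Quotient.mk _ (g * j (ofAdd a))) fun _ _ hab =>
    neg_add_mem_cosetStabilizer_iff.1 (QuotientAddGroup.leftRel_apply.1 hab)

theorem cosetOrbit_injective (g : G) : Function.Injective (cosetOrbit j H g) := by
  rintro ⟨a⟩ ⟨b⟩ hab
  exact QuotientAddGroup.eq.2 (neg_add_mem_cosetStabilizer_iff.2 hab)

/-- The double coset `HgA` of a coset `Hg`, where `A` is identified with the range of `j`. -/
def toDoubleCoset (j : Multiplicative A →* G) (H : Subgroup G) :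
    Quotient (QuotientGroup.rightRel H) → DoubleCoset.Quotient (H : Set G) (j.range : Set G) :=
  Quotient.lift (DoubleCoset.mk H j.range) fun x y hxy =>
    (DoubleCoset.eq H j.range x y).2
      ⟨y * x⁻¹, QuotientGroup.rightRel_apply.1 hxy, 1, one_mem _, by simp⟩

theorem range_cosetOrbit (g : G) :
    Set.range (cosetOrbit j H g) = toDoubleCoset j H ⁻¹' {DoubleCoset.mk H j.range g} := by
  ext C
  obtain ⟨x, rfl⟩ := Quotient.exists_rep C
  refine Iff.trans ?_ (eq_comm.trans (DoubleCoset.eq H j.range g x)).symm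
  constructor
  · rintro ⟨⟨a⟩, ha⟩
    exact ⟨_, rightCoset_mk_eq_iff.1 ha, j (ofAdd a), ⟨_, rfl⟩, by group⟩
  · rintro ⟨h, hh, _, ⟨a, rfl⟩, rfl⟩
    exact ⟨QuotientAddGroup.mk a.toAdd, rightCoset_mk_eq_iff.2 (by simpa [mul_assoc] using hh)⟩

theorem finite_doubleCosetQuotient (H K : Subgroup G) [K.FiniteIndex] :
    Finite (DoubleCoset.Quotient (H : Set G) (K : Set G)) :=
  .of_surjective (α := G ⧸ K) (Quotient.lift (DoubleCoset.mk H K) fun x y hxy =>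
    (DoubleCoset.eq H K x y).2
      ⟨1, one_mem _, x⁻¹ * y, QuotientGroup.leftRel_apply.1 hxy, by group⟩)
    fun q => q.inductionOn fun g => ⟨QuotientGroup.mk g, rfl⟩

variable {S : Set G} {ω : G → ℕ}

theorem isSemilinearSet_epigraph_cosetOrbit (hj : Function.Injective j) [j.range.FiniteIndex]
    (hS : Submonoid.closure S = ⊤) (hSfin : S.Finite) (g : G) :
    IsSemilinearSet {p : (A ⧸ cosetStabilizer j H g) × ℕ |
      cosetWeight S ω H (cosetOrbit j H g p.1) ≤ p.2} := by
  obtain ⟨Y, hYg, hYfin, hY⟩ := exists_finite_subset_forall_inv_mul_mem j.range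
    {y | Quotient.mk (QuotientGroup.rightRel H) y = Quotient.mk _ g}
  have hslice (y : G) := isSemilinearSet_slice hj (finite_weightGenerators (ω := ω) hSfin) y
  let q : A × ℕ →+ (A ⧸ cosetStabilizer j H g) × ℕ :=
    (QuotientAddGroup.mk' _).prodMap (AddMonoidHom.id ℕ)
  convert IsSemilinearSet.biUnion hYfin fun y _ => (hslice y).image q using 1
  ext ⟨⟨a⟩, k⟩
  simp only [Set.mem_iUnion₂, Set.mem_image]
  refine (cosetWeight_le_iff hS).trans ⟨?_, ?_⟩
  · rintro ⟨x, hx, hxk⟩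
    have hxa : Quotient.mk (QuotientGroup.rightRel H) (x * (j (ofAdd a))⁻¹) = Quotient.mk _ g := by
      rw [← rightCoset_mk_mul_right_inj (j (ofAdd a)), inv_mul_cancel_right]
      exact hx
    obtain ⟨y, hy, b, hb⟩ := hY _ hxa
    obtain ⟨b, rfl⟩ := ofAdd.surjective b
    obtain rfl : x = y * j (ofAdd (b + a)) := by
      rw [ofAdd_add, map_mul, hb]
      group
    refine ⟨y, hy, (b + a, k), hxk, Prod.ext ?_ rfl⟩
    refine cosetOrbit_injective g (.trans ?_ hx)
    exact (rightCoset_mk_mul_right_inj _).2 (hYg hy).symm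
  · rintro ⟨y, hy, ⟨b, l⟩, hyb, hba⟩
    obtain ⟨hba, rfl⟩ := Prod.ext_iff.1 hba
    refine ⟨y * j (ofAdd b), .trans ?_ (congrArg (cosetOrbit j H g) hba), hyb⟩
    exact (rightCoset_mk_mul_right_inj _).2 (hYg hy)

theorem hasRationalGrowth_cosetWeight (hj : Function.Injective j) [j.range.FiniteIndex]
    (hS : Submonoid.closure S = ⊤) (hSfin : S.Finite) (hω : ∀ s ∈ S, 0 < ω s) :
    HasRationalGrowth (cosetWeight S ω H) Set.univ := by
  have := finite_doubleCosetQuotient H j.range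
  refine .of_fibers (toDoubleCoset j H) fun D => ?_
  obtain ⟨g, rfl⟩ := Quotient.exists_rep D
  have hepigraph : HasRationalGrowth Prod.snd {p : (A ⧸ cosetStabilizer j H g) × ℕ |
      cosetWeight S ω H (cosetOrbit j H g p.1) ≤ p.2} := by
    refine .of_isSemilinearSet (wt := AddMonoidHom.snd _ ℕ)
      (isSemilinearSet_epigraph_cosetOrbit hj hS hSfin g) fun k => ?_
    refine (((finite_setOf_cosetWeight_le hS hSfin hω k).preimage
      (cosetOrbit_injective g).injOn).image fun c => (c, k)).subset ?_
    rintro ⟨c, l⟩ ⟨hc, rfl⟩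
    exact ⟨c, hc, rfl⟩
  have horbit := hepigraph.univ_of_epigraph.image (wt' := cosetWeight S ω H) (d := 0) (fun _ _ => rfl)
    (cosetOrbit_injective g).injOn
  rwa [Set.image_univ, range_cosetOrbit] at horbit

end Cosets

open IsMulCommutative in
theorem coset_growth_series_rational_general {G : Type*} [Group G]
    (N : Subgroup G) [N.FiniteIndex] [IsMulCommutative N]
    (S : Finset G) (hS : Submonoid.closure (S : Set G) = ⊤)
    (ω : G → ℕ) (hω : ∀ s ∈ S, 0 < ω s) (H : Subgroup G) :
    IsRationalSeries (PowerSeries.mk fun k =>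
      (Nat.card {C : Quotient (QuotientGroup.rightRel H) //
        cosetWeight (S : Set G) ω H C = k} : ℤ)) := by
  let j : Multiplicative (Additive N) →* G := N.subtype
  have : j.range.FiniteIndex := N.range_subtype.symm ▸ ‹N.FiniteIndex›
  have hgrowth : HasRationalGrowth (cosetWeight S ω H) Set.univ :=
    hasRationalGrowth_cosetWeight (j := j) N.subtype_injective hS S.finite_toSet hω
  convert hgrowth.rational using 1
  simp only [growthSeries, Set.univ_inter]
  rfl

/-- The coset growth series of any subgroup of a finitely generated virtually abelian
group is rational, for any finite weighted monoid generating set. -/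
theorem coset_growth_series_rational {G : Type*} [Group G]
    (n : ℕ) (N : Subgroup G) (hN : N.Normal) (hNfin : N.FiniteIndex)
    (hNiso : Nonempty (N ≃* Multiplicative (Fin n → ℤ)))
    (S : Finset G) (hS : Submonoid.closure (S : Set G) = ⊤)
    (ω : G → ℕ) (hω : ∀ s ∈ S, 0 < ω s)
    (H : Subgroup G) :
    IsRationalSeries (PowerSeries.mk fun k =>
      (Nat.card {C : Quotient (QuotientGroup.rightRel H) //
        cosetWeight (S : Set G) ω H C = k} : ℤ)) := by
  have : IsMulCommutative N := .of_comm fun x y => hNiso.some.injective (by simp [mul_comm])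
  exact coset_growth_series_rational_general N S hS ω hω H
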